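/- Let E be a Banach space and (R_t)_{t≥0} a semigroup of linear contractions on C_b(H) with R_t(C_b(H)) ⊆ C_b²(H) for t > 0, satisfying ‖D²R_tφ‖₀ ≤ C₀ t^{-1} ‖φ‖₀ for t ∈ (0,1] and all φ ∈ C_b(H). If f ∈ C_b(H) satisfies ‖R_t f - f‖₀ ≤ N t^{1/2} for t ∈ [0,1], then f belongs to the Zygmund space 𝒞¹(H), i.e., sup_{x, 0<|h|≤1} |f(x+h) - 2f(x) + f(x-h)|/|h| < ∞, with [f]_{𝒞¹} ≤ 16(C₀+1)(N + ‖f‖₀). -/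

import Mathlib

open Real Set

/-!
Regularising `f` to `R t f` costs `N t ^ θ`, while the semigroup law gives
`R t f - R (2 t) f = R t (f - R t f)`, whose second derivative is at most `C₀ t⁻¹ · N t ^ θ`.
Doubling `t` until it lies in `(1/2, 1]` and summing the resulting geometric series, the second
derivative of `R t f` is of order `t ^ (θ - 1)`. The choice `t = ‖h‖ ^ 2` balances the two errors
in the second difference of `f`; the Zygmund class is the case `θ = 1 / 2`.
-/

section SecondDifference

section Algebra

variable {E F : Type*} [AddCommGroup E] [AddCommGroup F]

/-- The symmetric second difference of `g` at `x` with increment `h`, as in the Zygmund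
seminorm. -/
def secondDiff (g : E → F) (x h : E) : F := g (x + h) - 2 • g x + g (x - h)

lemma secondDiff_sub (g k : E → F) (x h : E) :
    secondDiff (g - k) x h = secondDiff g x h - secondDiff k x h := by
  simp only [secondDiff, Pi.sub_apply, smul_sub]
  abel

end Algebra

lemma norm_secondDiff_le_four_mul {E F : Type*} [AddCommGroup E] [NormedAddCommGroup F]
    {g : E → F} {M : ℝ} (hg : ∀ y, ‖g y‖ ≤ M) (x h : E) :
    ‖secondDiff g x h‖ ≤ 4 * M :=
  calc ‖secondDiff g x h‖
      ≤ ‖g (x + h) - 2 • g x‖ + ‖g (x - h)‖ := norm_add_le _ _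
    _ ≤ ‖g (x + h)‖ + ‖2 • g x‖ + ‖g (x - h)‖ := by gcongr; exact norm_sub_le _ _
    _ ≤ M + 2 * M + M := by
        gcongr
        · exact hg _
        · exact (norm_nsmul_le (n := 2)).trans (by rw [Nat.cast_ofNat]; gcongr; exact hg x)
        · exact hg _
    _ = 4 * M := by ring

variable {E F : Type*} [NormedAddCommGroup E] [NormedAddCommGroup F]

lemma norm_secondDiff_le_mul_rpow_of_approx {f : E → F} {G : ℝ → E → F} {θ N K : ℝ}
    (happrox : ∀ t ∈ Ioc (0 : ℝ) 1, ∀ y, ‖G t y - f y‖ ≤ N * t ^ θ)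
    (hG : ∀ t ∈ Ioc (0 : ℝ) 1, ∀ x h, ‖secondDiff (G t) x h‖ ≤ K * t ^ (θ - 1) * ‖h‖ ^ 2)
    (x : E) {h : E} (hh : h ≠ 0) (hh1 : ‖h‖ ≤ 1) :
    ‖secondDiff f x h‖ ≤ (4 * N + K) * ‖h‖ ^ (2 * θ) := by
  have hpos := norm_pos_iff.2 hh
  have ht : ‖h‖ ^ 2 ∈ Ioc (0 : ℝ) 1 := ⟨by positivity, pow_le_one₀ hpos.le hh1⟩
  have herror := norm_secondDiff_le_four_mul (g := G (‖h‖ ^ 2) - f) (happrox _ ht) x h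
  rw [secondDiff_sub] at herror
  calc ‖secondDiff f x h‖
      ≤ ‖secondDiff (G (‖h‖ ^ 2)) x h‖
          + ‖secondDiff (G (‖h‖ ^ 2)) x h - secondDiff f x h‖ := norm_le_norm_add_norm_sub _ _
    _ ≤ K * (‖h‖ ^ 2) ^ (θ - 1) * ‖h‖ ^ 2 + 4 * (N * (‖h‖ ^ 2) ^ θ) :=
        add_le_add (hG _ ht x h) herror
    _ = (4 * N + K) * ‖h‖ ^ (2 * θ) := by
        rw [mul_assoc K, ← rpow_add_one ht.1.ne', sub_add_cancel, rpow_mul hpos.le, rpow_ofNat]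
        ring

variable [NormedSpace ℝ E] [NormedSpace ℝ F]

lemma norm_fderiv_sub_le_of_norm_iteratedFDeriv_two_le {g : E → F} (hg : ContDiff ℝ 2 g) {B : ℝ}
    (hB : ∀ y, ‖iteratedFDeriv ℝ 2 g y‖ ≤ B) (y z : E) :
    ‖fderiv ℝ g z - fderiv ℝ g y‖ ≤ B * ‖z - y‖ := by
  have hdiff : Differentiable ℝ (fderiv ℝ g) :=
    (hg.fderiv_right (m := 1) (by norm_num)).differentiable (by norm_num)
  have hbound : ∀ w, ‖fderiv ℝ (fderiv ℝ g) w‖ ≤ B := fun w => by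
    rw [← norm_iteratedFDeriv_one, norm_iteratedFDeriv_fderiv]
    exact hB w
  exact convex_univ.norm_image_sub_le_of_norm_fderiv_le (fun w _ => hdiff w)
    (fun w _ => hbound w) (mem_univ y) (mem_univ z)

lemma norm_secondDiff_le_of_norm_iteratedFDeriv_two_le {g : E → F} (hg : ContDiff ℝ 2 g) {B : ℝ}
    (hB : ∀ y, ‖iteratedFDeriv ℝ 2 g y‖ ≤ B) (x h : E) :
    ‖secondDiff g x h‖ ≤ B * ‖h‖ ^ 2 := by
  have hd : Differentiable ℝ g := hg.differentiable (by norm_num)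
  have hderiv : ∀ y, HasFDerivAt (fun y => g (y + h) - g y)
      (fderiv ℝ g (y + h) - fderiv ℝ g y) y := fun y =>
    ((hasFDerivAt_comp_add_right h).2 (hd (y + h)).hasFDerivAt).sub (hd y).hasFDerivAt
  have hderiv_le : ∀ y, ‖fderiv ℝ g (y + h) - fderiv ℝ g y‖ ≤ B * ‖h‖ := fun y => by
    simpa only [add_sub_cancel_left] using
      norm_fderiv_sub_le_of_norm_iteratedFDeriv_two_le hg hB y (y + h)
  calc ‖secondDiff g x h‖
      = ‖(g (x + h) - g x) - (g (x - h + h) - g (x - h))‖ := by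
        rw [sub_add_cancel, secondDiff, two_nsmul]
        congr 1
        abel
    _ ≤ B * ‖h‖ * ‖x - (x - h)‖ :=
        convex_univ.norm_image_sub_le_of_norm_hasFDerivWithin_le
          (fun y _ => (hderiv y).hasFDerivWithinAt) (fun y _ => hderiv_le y)
          (mem_univ (x - h)) (mem_univ x)
    _ = B * ‖h‖ ^ 2 := by rw [sub_sub_cancel]; ring

end SecondDifference

lemma one_sub_two_rpow_pos {a : ℝ} (ha : a < 0) : 0 < 1 - (2 : ℝ) ^ a :=
  sub_pos.2 (rpow_lt_one_of_one_lt_of_neg one_lt_two ha)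

lemma le_mul_rpow_of_le_two_mul_add {u : ℝ → ℝ} {a A B : ℝ} (ha : a < 0) (hA : 0 ≤ A) (hB : 0 ≤ B)
    (hdouble : ∀ t ∈ Ioc (0 : ℝ) (1 / 2), u t ≤ u (2 * t) + A * t ^ a)
    (hlarge : ∀ t ∈ Ioc (1 / 2 : ℝ) 1, u t ≤ B) {t : ℝ} (ht : t ∈ Ioc (0 : ℝ) 1) :
    u t ≤ (B + A / (1 - 2 ^ a)) * t ^ a := by
  have hq := one_sub_two_rpow_pos ha
  -- Up to the slack coming from `B`, `K` is the fixed point of `k ↦ k * 2 ^ a + A`.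
  set K := B + A / (1 - 2 ^ a) with hK
  have hfix : K * 2 ^ a + A ≤ K := by
    have : K * (1 - 2 ^ a) = B * (1 - 2 ^ a) + A := by rw [hK]; field_simp
    nlinarith
  have hbase : ∀ t ∈ Ioc (1 / 2 : ℝ) 1, u t ≤ K * t ^ a := fun t ht =>
    calc u t ≤ B := hlarge t ht
      _ ≤ K := le_add_of_nonneg_right (by positivity)
      _ ≤ K * t ^ a := le_mul_of_one_le_right (by positivity)
          (one_le_rpow_of_pos_of_le_one_of_nonpos (one_half_pos.trans ht.1) ht.2 ha.le)
  have hdyadic : ∀ k : ℕ, ∀ t ∈ Ioc (0 : ℝ) 1, 1 < 2 ^ k * t → u t ≤ K * t ^ a := by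
    intro k
    induction k with
    | zero =>
      intro t ht hk
      rw [pow_zero, one_mul] at hk
      exact absurd ht.2 hk.not_ge
    | succ k ih =>
      intro t ht hk
      rcases lt_or_ge (1 / 2) t with hbig | hsmall
      · exact hbase t ⟨hbig, ht.2⟩
      calc u t ≤ u (2 * t) + A * t ^ a := hdouble t ⟨ht.1, hsmall⟩
        _ ≤ K * (2 * t) ^ a + A * t ^ a := by
            gcongr
            exact ih (2 * t) ⟨by linarith [ht.1], by linarith⟩ (by rwa [← mul_assoc, ← pow_succ])
        _ = (K * 2 ^ a + A) * t ^ a := by rw [mul_rpow zero_le_two ht.1.le]; ring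
        _ ≤ K * t ^ a := by have := ht.1; gcongr
  obtain ⟨k, hk⟩ := pow_unbounded_of_one_lt (1 / t) (one_lt_two (α := ℝ))
  exact hdyadic k t ht ((div_lt_iff₀ ht.1).1 hk)

section Approximation

variable {E F : Type*} [NormedAddCommGroup E] [NormedSpace ℝ E]
  [NormedAddCommGroup F] [NormedSpace ℝ F]

lemma norm_secondDiff_le_mul_rpow_of_iteratedFDeriv {G : ℝ → E → F} {θ A B : ℝ} (hθ : θ < 1)
    (hG : ∀ t ∈ Ioc (0 : ℝ) 1, ContDiff ℝ 2 (G t))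
    (hdouble : ∀ t ∈ Ioc (0 : ℝ) (1 / 2), ∀ y,
      ‖iteratedFDeriv ℝ 2 (G t - G (2 * t)) y‖ ≤ A * t ^ (θ - 1))
    (hlarge : ∀ t ∈ Ioc (1 / 2 : ℝ) 1, ∀ y, ‖iteratedFDeriv ℝ 2 (G t) y‖ ≤ B)
    {t : ℝ} (ht : t ∈ Ioc (0 : ℝ) 1) (x h : E) :
    ‖secondDiff (G t) x h‖ ≤ (B + A / (1 - 2 ^ (θ - 1))) * t ^ (θ - 1) * ‖h‖ ^ 2 := by
  have hA : 0 ≤ A := by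
    have := (norm_nonneg _).trans (hdouble (1 / 2) (by norm_num) 0)
    exact nonneg_of_mul_nonneg_left this (by positivity)
  have hB : 0 ≤ B := (norm_nonneg _).trans (hlarge 1 (by norm_num) 0)
  have key := le_mul_rpow_of_le_two_mul_add (u := fun s => ‖secondDiff (G s) x h‖)
    (A := A * ‖h‖ ^ 2) (B := B * ‖h‖ ^ 2) (sub_neg.2 hθ) (by positivity) (by positivity)
    (fun s hs => ?_) (fun s hs => ?_) ht
  · exact key.trans_eq (by ring)
  · have hdiff : ContDiff ℝ 2 (G s - G (2 * s)) :=
      (hG s ⟨hs.1, by linarith [hs.2]⟩).sub (hG (2 * s) ⟨by linarith [hs.1], by linarith [hs.2]⟩)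
    have := norm_secondDiff_le_of_norm_iteratedFDeriv_two_le hdiff (hdouble s hs) x h
    rw [secondDiff_sub] at this
    linarith [norm_le_norm_add_norm_sub' (secondDiff (G s) x h) (secondDiff (G (2 * s)) x h)]
  · exact norm_secondDiff_le_of_norm_iteratedFDeriv_two_le
      (hG s ⟨one_half_pos.trans hs.1, hs.2⟩) (hlarge s hs) x h

end Approximation

section Semigroup

variable {E F : Type*} [NormedAddCommGroup E] [NormedSpace ℝ E]
  [NormedAddCommGroup F] [NormedSpace ℝ F]

/-- Membership of a bare function in the space of bounded continuous functions. It is not bundled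
because the operators `R t` below are total on all functions. -/
def IsBoundedContinuous {X F : Type*} [TopologicalSpace X] [NormedAddCommGroup F]
    (φ : X → F) : Prop :=
  Continuous φ ∧ ∃ C, ∀ x, ‖φ x‖ ≤ C

/-- The second-order smoothing semigroups of the Zygmund lemma, with `‖D² R t φ‖₀ ≤ C₀ t⁻¹ ‖φ‖₀`
on bounded continuous functions. The sup norm `‖φ‖₀` is encoded by quantifying over the bounds
`C` of `φ`. -/
structure IsSmoothingSemigroup (R : ℝ → (E → F) → E → F) (C₀ : ℝ) : Prop where
  map_add_time : ∀ s t : ℝ, 0 < s → 0 < t → ∀ φ, IsBoundedContinuous φ →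
    R (s + t) φ = R s (R t φ)
  map_sub : ∀ t : ℝ, 0 < t → ∀ φ ψ, IsBoundedContinuous φ → IsBoundedContinuous ψ →
    R t (φ - ψ) = R t φ - R t ψ
  contDiff : ∀ φ, IsBoundedContinuous φ → ∀ t ∈ Ioc (0 : ℝ) 1, ContDiff ℝ 2 (R t φ)
  norm_iteratedFDeriv_le : ∀ φ, Continuous φ → ∀ C : ℝ, (∀ x, ‖φ x‖ ≤ C) →
    ∀ t ∈ Ioc (0 : ℝ) 1, ∀ x, ‖iteratedFDeriv ℝ 2 (R t φ) x‖ ≤ C₀ / t * C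

namespace IsSmoothingSemigroup

variable {R : ℝ → (E → F) → E → F} {C₀ : ℝ}

lemma const_nonneg (hR : IsSmoothingSemigroup R C₀) : 0 ≤ C₀ := by
  have := hR.norm_iteratedFDeriv_le 0 continuous_const 1 (by simp) 1 (by simp) 0
  simpa using (norm_nonneg _).trans this

lemma sub_two_mul_eq (hR : IsSmoothingSemigroup R C₀) {t : ℝ} (ht : 0 < t) {f : E → F}
    (hf : IsBoundedContinuous f) (hRf : IsBoundedContinuous (R t f)) :
    R t f - R (2 * t) f = R t (f - R t f) := by
  rw [two_mul, hR.map_add_time t t ht ht f hf, hR.map_sub t ht f _ hf hRf]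

lemma norm_iteratedFDeriv_sub_two_mul_le (hR : IsSmoothingSemigroup R C₀) {f : E → F}
    (hf : IsBoundedContinuous f) {t ε : ℝ} (ht : t ∈ Ioc (0 : ℝ) 1)
    (hε : ∀ x, ‖R t f x - f x‖ ≤ ε) (x : E) :
    ‖iteratedFDeriv ℝ 2 (R t f - R (2 * t) f) x‖ ≤ C₀ / t * ε := by
  have hcont : Continuous (R t f) := (hR.contDiff f hf t ht).continuous
  obtain ⟨C, hC⟩ := hf.2
  have hRf : IsBoundedContinuous (R t f) :=
    ⟨hcont, C + ε, fun y => (norm_le_norm_add_norm_sub _ _).trans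
      (add_le_add (hC y) (by rw [norm_sub_rev]; exact hε y))⟩
  rw [hR.sub_two_mul_eq ht.1 hf hRf]
  refine hR.norm_iteratedFDeriv_le (f - R t f) (hf.1.sub hcont) ε (fun y => ?_) t ht x
  rw [Pi.sub_apply, norm_sub_rev]
  exact hε y

lemma norm_secondDiff_apply_le (hR : IsSmoothingSemigroup R C₀) {f : E → F} (hfc : Continuous f)
    {θ N Cf : ℝ} (hfb : ∀ x, ‖f x‖ ≤ Cf) (hθ : θ < 1)
    (hN : ∀ t ∈ Ioc (0 : ℝ) 1, ∀ x, ‖R t f x - f x‖ ≤ N * t ^ θ)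
    {t : ℝ} (ht : t ∈ Ioc (0 : ℝ) 1) (x h : E) :
    ‖secondDiff (R t f) x h‖
      ≤ (2 * C₀ * Cf + C₀ * N / (1 - 2 ^ (θ - 1))) * t ^ (θ - 1) * ‖h‖ ^ 2 := by
  have hf : IsBoundedContinuous f := ⟨hfc, Cf, hfb⟩
  have hC₀ := hR.const_nonneg
  have hCf : 0 ≤ Cf := (norm_nonneg _).trans (hfb 0)
  refine norm_secondDiff_le_mul_rpow_of_iteratedFDeriv (G := fun s => R s f) hθ
    (hR.contDiff f hf) (fun s hs y => ?_) (fun s hs y => ?_) ht x h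
  · have hs1 : s ∈ Ioc (0 : ℝ) 1 := ⟨hs.1, by linarith [hs.2]⟩
    refine (hR.norm_iteratedFDeriv_sub_two_mul_le hf hs1 (hN s hs1) y).trans_eq ?_
    rw [rpow_sub_one hs.1.ne']
    ring
  · have hs0 : 0 < s := one_half_pos.trans hs.1
    refine (hR.norm_iteratedFDeriv_le f hfc Cf hfb s ⟨hs0, hs.2⟩ y).trans ?_
    gcongr
    rw [div_le_iff₀ hs0]
    nlinarith [hs.1]

end IsSmoothingSemigroup

lemma four_div_one_sub_two_rpow_neg_half_le : 4 / (1 - (2 : ℝ) ^ (1 / 2 - 1 : ℝ)) ≤ 16 := by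
  have hpow : (2 : ℝ) ^ (1 / 2 - 1 : ℝ) = √2 / 2 := by
    rw [rpow_sub_one two_ne_zero, ← sqrt_eq_rpow]
  have hsqrt : √(2 : ℝ) ≤ 3 / 2 := sqrt_le_iff.2 (by norm_num)
  rw [hpow, div_le_iff₀ (by linarith)]
  linarith

theorem zygmund_lemma_general {R : ℝ → (E → F) → E → F} {C₀ : ℝ}
    (hR : IsSmoothingSemigroup R C₀) {f : E → F} (hfc : Continuous f) {θ N Cf : ℝ} (hθ : θ < 1)
    (hfb : ∀ x, ‖f x‖ ≤ Cf)
    (hN : ∀ t ∈ Ioc (0 : ℝ) 1, ∀ x, ‖R t f x - f x‖ ≤ N * t ^ θ)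
    (x : E) {h : E} (hh : h ≠ 0) (hh1 : ‖h‖ ≤ 1) :
    ‖secondDiff f x h‖
      ≤ 4 / (1 - 2 ^ (θ - 1)) * ((C₀ + 1) * (N + Cf) * ‖h‖ ^ (2 * θ)) := by
  have hC₀ := hR.const_nonneg
  have hCf : 0 ≤ Cf := (norm_nonneg _).trans (hfb 0)
  have hN0 : 0 ≤ N := by simpa using (norm_nonneg _).trans (hN 1 (by simp) 0)
  have hq := one_sub_two_rpow_pos (sub_neg.2 hθ)
  have hq1 : 1 - (2 : ℝ) ^ (θ - 1) ≤ 1 := sub_le_self _ (by positivity)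
  refine (norm_secondDiff_le_mul_rpow_of_approx hN
    (fun t ht => hR.norm_secondDiff_apply_le hfc hfb hθ hN ht) x hh hh1).trans ?_
  rw [← mul_assoc]
  gcongr
  calc 4 * N + (2 * C₀ * Cf + C₀ * N / (1 - 2 ^ (θ - 1)))
      ≤ (4 * N + 2 * C₀ * Cf) / (1 - 2 ^ (θ - 1)) + C₀ * N / (1 - 2 ^ (θ - 1)) := by
        rw [← add_assoc]
        gcongr
        exact le_div_self (by positivity) hq hq1
    _ = (4 * N + 2 * C₀ * Cf + C₀ * N) / (1 - 2 ^ (θ - 1)) := by rw [← add_div]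
    _ ≤ 4 * ((C₀ + 1) * (N + Cf)) / (1 - 2 ^ (θ - 1)) := by
        gcongr
        nlinarith [mul_nonneg hC₀ hN0, mul_nonneg hC₀ hCf]
    _ = 4 / (1 - 2 ^ (θ - 1)) * ((C₀ + 1) * (N + Cf)) := by ring

lemma norm_secondDiff_le_sixteen_mul {R : ℝ → (E → F) → E → F} {C₀ : ℝ}
    (hR : IsSmoothingSemigroup R C₀) {f : E → F} (hfc : Continuous f) {N Cf : ℝ}
    (hfb : ∀ x, ‖f x‖ ≤ Cf)
    (hN : ∀ t ∈ Ioc (0 : ℝ) 1, ∀ x, ‖R t f x - f x‖ ≤ N * √t)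
    (x : E) {h : E} (hh : h ≠ 0) (hh1 : ‖h‖ ≤ 1) :
    ‖secondDiff f x h‖ ≤ 16 * (C₀ + 1) * (N + Cf) * ‖h‖ := by
  simp only [sqrt_eq_rpow] at hN
  have hbound := zygmund_lemma_general hR hfc one_half_lt_one hfb hN x hh hh1
  rw [mul_one_div_cancel two_ne_zero, rpow_one] at hbound
  have hconst : 0 < 4 / (1 - (2 : ℝ) ^ (1 / 2 - 1 : ℝ)) :=
    div_pos four_pos (one_sub_two_rpow_pos (by norm_num))
  have hnonneg : 0 ≤ (C₀ + 1) * (N + Cf) * ‖h‖ :=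
    nonneg_of_mul_nonneg_right ((norm_nonneg _).trans hbound) hconst
  calc ‖secondDiff f x h‖ ≤ _ := hbound
    _ ≤ 16 * ((C₀ + 1) * (N + Cf) * ‖h‖) := by
        gcongr
        exact four_div_one_sub_two_rpow_neg_half_le
    _ = 16 * (C₀ + 1) * (N + Cf) * ‖h‖ := by ring

end Semigroup

/-- Zygmund lemma: let `(R_t)` be a semigroup of linear contractions on `C_b(H)`
mapping `C_b(H)` into `C_b²(H)` for `t > 0`, with `‖D²R_tφ‖₀ ≤ C₀ t⁻¹ ‖φ‖₀` for
`t ∈ (0,1]`. If `f ∈ C_b(H)` satisfies `‖R_t f - f‖₀ ≤ N √t` for `t ∈ [0,1]`,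
then `f` is in the Zygmund space `𝒞¹(H)`, with
`|f(x+h) - 2f(x) + f(x-h)| ≤ 16(C₀+1)(N + ‖f‖₀)|h|` for `|h| ≤ 1`. -/
theorem zygmund_lemma
    {H : Type*} [NormedAddCommGroup H] [InnerProductSpace ℝ H]
    (R : ℝ → (H → ℝ) → (H → ℝ))
    (hR0 : ∀ φ, R 0 φ = φ)
    (hRsg : ∀ s t : ℝ, 0 ≤ s → 0 ≤ t → ∀ φ, R (s + t) φ = R s (R t φ))
    (hlin : ∀ t : ℝ, 0 ≤ t → IsLinearMap ℝ (R t))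
    (hRcont : ∀ t : ℝ, 0 ≤ t → ∀ φ : H → ℝ, Continuous φ → Continuous (R t φ))
    (hcontr : ∀ t : ℝ, 0 ≤ t → ∀ (φ : H → ℝ) (C : ℝ),
      (∀ x, |φ x| ≤ C) → ∀ x, |R t φ x| ≤ C)
    (C₀ : ℝ)
    (hsmooth : ∀ φ : H → ℝ, Continuous φ → ∀ t ∈ Ioc (0 : ℝ) 1, ContDiff ℝ 2 (R t φ))
    (hD2 : ∀ (φ : H → ℝ), Continuous φ → ∀ C : ℝ, (∀ x, |φ x| ≤ C) →
      ∀ t ∈ Ioc (0 : ℝ) 1, ∀ x, ‖iteratedFDeriv ℝ 2 (R t φ) x‖ ≤ C₀ / t * C)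
    (f : H → ℝ) (hfc : Continuous f) (N Cf : ℝ)
    (hfb : ∀ x, |f x| ≤ Cf)
    (hN : ∀ t ∈ Icc (0 : ℝ) 1, ∀ x, |R t f x - f x| ≤ N * Real.sqrt t) :
    ∀ x h : H, h ≠ 0 → ‖h‖ ≤ 1 →
      |f (x + h) - 2 * f x + f (x - h)| ≤ 16 * (C₀ + 1) * (N + Cf) * ‖h‖ := by
  intro x h hh hh1
  have hR : IsSmoothingSemigroup R C₀ :=
    ⟨fun s t hs ht φ _ => hRsg s t hs.le ht.le φ, fun t ht φ ψ _ _ => (hlin t ht.le).map_sub φ ψ,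
      fun φ hφ => hsmooth φ hφ.1, hD2⟩
  simpa only [secondDiff, nsmul_eq_mul, Nat.cast_ofNat, norm_eq_abs] using
    norm_secondDiff_le_sixteen_mul hR hfc hfb (fun t ht => hN t (Ioc_subset_Icc_self ht)) x hh hh1
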